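/- arXiv:1012.0433 — 2 statements merged into one kernel-verified Lean document; each statement's English description precedes it below -/
import Mathlib

section
/- The correspondence Δ ↦ 𝗪(Δ) is a faithful representation of the algebra A_∞° by differential operators: for all Young diagrams Δ₁, Δ₂, the composition of operators on ℚ[p₁,p₂,…] satisfies 𝗪(Δ₁) ∘ 𝗪(Δ₂) = Σ_Δ C^Δ_{Δ₁Δ₂} 𝗪(Δ), where C^Δ_{Δ₁Δ₂} are the structure constants of the algebra A_∞° (so the sum runs over Δ with max(|Δ₁|,|Δ₂|) ≤ |Δ| ≤ |Δ₁|+|Δ₂|); moreover, the operators 𝗪(Δ), with Δ ranging over all Young diagrams, are linearly independent over ℚ. -/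
open scoped Classical

/-- The full cycle type of a permutation of `Fin n`, including fixed points
(i.e. rows of length 1). -/
noncomputable def fullCycleType {n : ℕ} (g : Equiv.Perm (Fin n)) : Multiset ℕ :=
  g.cycleType + Multiset.replicate (n - g.cycleType.sum) 1

/-- `Δ^k` : the Young diagram obtained from `Δ` by adding `k` rows of length 1,
realized as a partition of a given `m ≥ |Δ| `. -/
def padTo {n : ℕ} (Δ : n.Partition) (m : ℕ) (h : n ≤ m) : m.Partition where
  parts := Δ.parts + Multiset.replicate (m - n) 1
  parts_pos := by
    intro i hi
    rcases Multiset.mem_add.mp hi with h1 | h2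
    · exact Δ.parts_pos h1
    · simp [Multiset.eq_of_mem_replicate h2]
  parts_sum := by
    simp [Δ.parts_sum]
    omega

/-- The class sum `G_n(Δ)` : sum of all permutations of cycle type `Δ` in the group
algebra `ℚ[S_n]`. -/
noncomputable def classSum (n : ℕ) (Δ : n.Partition) :
    MonoidAlgebra ℚ (Equiv.Perm (Fin n)) :=
  ∑ g ∈ Finset.univ.filter (fun g => fullCycleType g = Δ.parts),
    MonoidAlgebra.single g (1 : ℚ)

/-- The coordinates of a central element of `ℚ[S_n]` in the basis of class sums:
the (average) coefficient on the conjugacy class of cycle type `Δ`. -/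
noncomputable def classCoeff {n : ℕ} (x : MonoidAlgebra ℚ (Equiv.Perm (Fin n)))
    (Δ : n.Partition) : ℚ :=
  (∑ g ∈ Finset.univ.filter (fun g => fullCycleType g = Δ.parts), x.coeff g) /
    ((Finset.univ.filter (fun g : Equiv.Perm (Fin n) => fullCycleType g = Δ.parts)).card : ℚ)

/-- An element of `A_n` (the centre of `ℚ[S_n]`), written in coordinates with respect to
the basis of class sums, viewed inside the group algebra. -/
noncomputable def embedCenter {n : ℕ} (x : n.Partition → ℚ) :
    MonoidAlgebra ℚ (Equiv.Perm (Fin n)) :=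
  ∑ Δ : n.Partition, x Δ • classSum n Δ

/-- The product `∘` of the algebra `A_n` in the coordinates given by class sums. -/
noncomputable def circ {n : ℕ} (x y : n.Partition → ℚ) : n.Partition → ℚ :=
  fun Δ => classCoeff (embedCenter x * embedCenter y) Δ

/-- The coordinates of a single Young diagram `Δ`, i.e. of the class sum `G_n(Δ) ∈ A_n`. -/
noncomputable def diagC {n : ℕ} (Δ : n.Partition) : n.Partition → ℚ :=
  fun Λ => if Λ = Δ then 1 else 0

/-- The padding map `ρ_{m-n} : A_n → A_m`,
`ρ_k(Δ) = ((r+k)!/(r!·k!))·Δ^k` where `r` is the number of rows of length 1 of `Δ`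
(in class-sum coordinates); it is `0` when `m < n`. -/
noncomputable def rhoTo {n : ℕ} (m : ℕ) (x : n.Partition → ℚ) : m.Partition → ℚ :=
  fun Λ =>
    if n ≤ m then
      ∑ Δ : n.Partition,
        (if Λ.parts = Δ.parts + Multiset.replicate (m - n) 1 then
          (((Δ.parts.count 1 + (m - n)).factorial : ℚ) /
            ((Δ.parts.count 1).factorial * (m - n).factorial)) * x Δ
        else 0)
    else 0

/-- The element `{Δ₁Δ₂}_n ∈ A_n`, defined by the recursion
`{Δ₁Δ₂}_n = ρ_{n−|Δ₁|}(Δ₁) ∘ ρ_{n−|Δ₂|}(Δ₂) − Σ_{k=max(|Δ₁|,|Δ₂|)}^{n−1} ρ_{n−k}({Δ₁Δ₂}_k)`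
for `max(|Δ₁|,|Δ₂|) ≤ n ≤ |Δ₁|+|Δ₂|` (and `0` outside this range). -/
noncomputable def bracket {n₁ n₂ : ℕ} (Δ₁ : n₁.Partition) (Δ₂ : n₂.Partition) :
    (n : ℕ) → n.Partition → ℚ
  | n =>
    if max n₁ n₂ ≤ n ∧ n ≤ n₁ + n₂ then
      circ (rhoTo n (diagC Δ₁)) (rhoTo n (diagC Δ₂)) -
        ∑ k ∈ (Finset.Ico (max n₁ n₂) n).attach,
          rhoTo n (bracket Δ₁ Δ₂ k.1)
    else 0
  termination_by n => n
  decreasing_by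
    have := Finset.mem_Ico.mp k.2
    omega

/-- The underlying graded vector space of the algebra `A_∞° = ⊕_n A_n`. -/
abbrev Ainf : Type := Π₀ n : ℕ, (Nat.Partition n → ℚ)

/-- A Young diagram `Δ` as an element of `A_∞°`. -/
noncomputable def ofDiag {n : ℕ} (Δ : n.Partition) : Ainf :=
  DFinsupp.single n (diagC Δ)

/-- The product of two Young diagrams in `A_∞°`:
`Δ₁·Δ₂ = Σ_{n=max(|Δ₁|,|Δ₂|)}^{|Δ₁|+|Δ₂|} {Δ₁Δ₂}_n`. -/
noncomputable def diagMul {n₁ n₂ : ℕ} (Δ₁ : n₁.Partition) (Δ₂ : n₂.Partition) : Ainf :=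
  ∑ n ∈ Finset.Icc (max n₁ n₂) (n₁ + n₂), DFinsupp.single n (bracket Δ₁ Δ₂ n)

/-- The bilinear extension of the product of Young diagrams to all of `A_∞°`. -/
noncomputable def mulAinf (x y : Ainf) : Ainf :=
  ∑ n₁ ∈ x.support, ∑ n₂ ∈ y.support,
    ∑ Δ₁ : Nat.Partition n₁, ∑ Δ₂ : Nat.Partition n₂,
      (x n₁ Δ₁ * y n₂ Δ₂) • diagMul Δ₁ Δ₂


/-- The polynomial ring `ℚ[X_{ij} : 1 ≤ i,j ≤ N]` in the entries of an `N×N` matrix of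
independent variables. -/
abbrev RN (N : ℕ) : Type := MvPolynomial (Fin N × Fin N) ℚ

/-- The `N×N` matrix `X` of independent variables. -/
noncomputable def XM (N : ℕ) : Matrix (Fin N) (Fin N) (RN N) :=
  Matrix.of fun i j => MvPolynomial.X (i, j)

/-- The power sums `p_k = tr X^k`. -/
noncomputable def pSub (N : ℕ) (k : ℕ+) : RN N := Matrix.trace ((XM N) ^ (k : ℕ))

/-- Substitution `F ↦ F(p(X))` of `p_k = tr X^k` into a polynomial in `p₁, p₂, …`
(the variable of index `k : ℕ+` is `p_k`). -/
noncomputable def psubst (N : ℕ) : MvPolynomial ℕ+ ℚ →ₐ[ℚ] RN N :=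
  MvPolynomial.aeval (pSub N)

/-- The operator `D_{ab} = Σ_{e=1}^N X_{ae} ∂/∂X_{be}`. -/
noncomputable def DN (N : ℕ) (a b : Fin N) (P : RN N) : RN N :=
  ∑ e : Fin N, MvPolynomial.X (a, e) * MvPolynomial.pderiv (b, e) P

/-- The normally ordered operator
`:D_{a₁b₁}⋯D_{a_nb_n}: = Σ_{e₁,…,e_n=1}^N X_{a₁e₁}⋯X_{a_ne_n} ∂ⁿ/(∂X_{b₁e₁}⋯∂X_{b_ne_n})`. -/
noncomputable def NOpN (N : ℕ) {n : ℕ} (a b : Fin n → Fin N) (P : RN N) : RN N :=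
  ∑ e : Fin n → Fin N,
    (∏ i, MvPolynomial.X (a i, e i)) *
      (List.ofFn (fun i => ((b i, e i) : Fin N × Fin N))).foldr
        (fun v G => MvPolynomial.pderiv v G) P


/-- `κ(Δ) = (∏_k m_k! k^{m_k})⁻¹` where `m_k` is the number of rows of length `k`. -/
noncomputable def kappa (parts : Multiset ℕ) : ℚ :=
  (∏ k ∈ parts.toFinset, (((parts.count k).factorial : ℚ) * (k : ℚ) ^ (parts.count k)))⁻¹

/-- The operator `𝒲_N(Δ) = κ(Δ) Σ_{a₁,…,a_n=1}^N :D_{a₁a_{g(1)}}⋯D_{a_na_{g(n)}}:`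
computed from a permutation `g` of cycle type `Δ`. -/
noncomputable def WN (N : ℕ) {n : ℕ} (Δ : Nat.Partition n) (g : Equiv.Perm (Fin n))
    (P : RN N) : RN N :=
  kappa Δ.parts • ∑ a : Fin n → Fin N, NOpN N a (fun i => a (g i)) P

/-!
Power sums of matrices of all sizes jointly separate polynomials in `p₁, p₂, …`, so everything can
be checked on the operators `𝒲_N(Δ)`. On a monomial of degree `d` in the matrix entries, read as a
word, `𝒲_N(Δ)` acts by the central element `ρ_{d-n}(Δ)` of `ℚ[S_d]`, which permutes the row indices
of the letters. A differential operator of order at most `m` is determined by its values on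
monomials of degree at most `m`, and for `d ≤ |Δ₁| + |Δ₂|` the recursion defining `{Δ₁Δ₂}_n` says
precisely that `∑ₙ ρ_{d-n}({Δ₁Δ₂}_n) = ρ_{d-n₁}(Δ₁) ∘ ρ_{d-n₂}(Δ₂)`; this is the multiplication
formula.

For independence, `𝗪(Δ) p₁ᵈ`, evaluated on `d × d` matrices, recovers `ρ_{d-n}(Δ)`, and the families
`(ρ_{d-n}(Δ))_d` are independent by triangularity in `d`.
-/

section PowerSums

variable {K : Type*} [Field K]

lemma sum_pow_of_isPrimitiveRoot {ζ : K} {n : ℕ} (hζ : IsPrimitiveRoot ζ n) (k : ℕ) :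
    ∑ i : Fin n, (ζ ^ (i : ℕ)) ^ k = if n ∣ k then (n : K) else 0 := by
  have hgeom : ∑ i : Fin n, (ζ ^ (i : ℕ)) ^ k = ∑ i ∈ Finset.range n, (ζ ^ k) ^ i := by
    rw [← Fin.sum_univ_eq_sum_range]
    simp only [← pow_mul, mul_comm]
  rw [hgeom]
  split_ifs with hk
  · simp [(hζ.pow_eq_one_iff_dvd k).mpr hk]
  · have hne : ζ ^ k ≠ 1 := fun h => hk ((hζ.pow_eq_one_iff_dvd k).mp h)
    rw [geom_sum_eq hne, ← pow_mul, mul_comm, pow_mul, hζ.pow_eq_one, one_pow, sub_self, zero_div]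

lemma exists_sum_pow_eq [IsAlgClosed K] [CharZero K] (v : ℕ → K) (m : ℕ) :
    ∃ (N : ℕ) (x : Fin N → K), ∀ k, 1 ≤ k → k ≤ m → ∑ i, x i ^ k = v k := by
  induction m with
  | zero => exact ⟨0, Fin.elim0, fun k h₁ h₂ => by omega⟩
  | succ m ih =>
    obtain ⟨N, x, hx⟩ := ih
    obtain ⟨ζ, hζ⟩ := HasEnoughRootsOfUnity.exists_primitiveRoot K (m + 1)
    obtain ⟨t, ht⟩ := IsAlgClosed.exists_pow_nat_eq
      ((v (m + 1) - ∑ i, x i ^ (m + 1)) / ((m + 1 : ℕ) : K)) m.succ_pos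
    -- scaled `(m + 1)`-st roots of unity change the `(m + 1)`-st power sum but no earlier one
    refine ⟨N + (m + 1), Fin.append x fun i => t * ζ ^ (i : ℕ), fun k hk hkm => ?_⟩
    have hsum : ∑ i, Fin.append x (fun i : Fin (m + 1) => t * ζ ^ (i : ℕ)) i ^ k =
        ∑ i, x i ^ k + t ^ k * if m + 1 ∣ k then ((m + 1 : ℕ) : K) else 0 := by
      simp only [Fin.sum_univ_add, Fin.append_left, Fin.append_right, mul_pow, ← Finset.mul_sum,
        sum_pow_of_isPrimitiveRoot hζ]
    rw [hsum]
    rcases hkm.lt_or_eq with hlt | rfl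
    · rw [if_neg (Nat.not_dvd_of_pos_of_lt hk hlt), mul_zero, add_zero, hx k hk (by omega)]
    · rw [if_pos dvd_rfl, ht, div_mul_cancel₀ _ (Nat.cast_ne_zero.mpr m.succ_ne_zero),
        add_sub_cancel]

end PowerSums

lemma aeval_pSub {A : Type*} [CommRing A] [Algebra ℚ A] {N : ℕ} (M : Matrix (Fin N) (Fin N) A)
    (k : ℕ+) :
    MvPolynomial.aeval (fun ij : Fin N × Fin N => M ij.1 ij.2) (pSub N k) =
      (M ^ (k : ℕ)).trace := by
  have hXM : (MvPolynomial.aeval fun ij : Fin N × Fin N => M ij.1 ij.2).mapMatrix (XM N) = M := by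
    ext i j
    simp [XM]
  conv_rhs => rw [← hXM, ← map_pow]
  exact AddMonoidHom.map_trace _ _

lemma aeval_diagonal_psubst {A : Type*} [CommRing A] [Algebra ℚ A] {N : ℕ} (x : Fin N → A)
    (F : MvPolynomial ℕ+ ℚ) :
    MvPolynomial.aeval (fun ij : Fin N × Fin N => Matrix.diagonal x ij.1 ij.2) (psubst N F) =
      MvPolynomial.aeval (fun k : ℕ+ => ∑ i, x i ^ (k : ℕ)) F := by
  rw [psubst, ← AlgHom.comp_apply, MvPolynomial.comp_aeval]
  simp only [aeval_pSub, Matrix.diagonal_pow, Matrix.trace_diagonal, Pi.pow_apply]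

lemma eq_zero_of_forall_psubst_eq_zero {F : MvPolynomial ℕ+ ℚ} (hF : ∀ N, psubst N F = 0) :
    F = 0 := by
  refine MvPolynomial.map_injective (algebraMap ℚ ℂ) (algebraMap ℚ ℂ).injective
    (MvPolynomial.funext fun v => ?_)
  obtain ⟨N, x, hx⟩ := exists_sum_pow_eq (fun k => v k.toPNat') (F.vars.sup (↑))
  have haeval := aeval_diagonal_psubst x F
  rw [hF N, map_zero] at haeval
  rw [MvPolynomial.eval_map, map_zero, map_zero, haeval]
  refine MvPolynomial.eval₂Hom_congr' rfl (fun k hk _ => ?_) rfl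
  rw [hx k k.pos (Finset.le_sup (f := PNat.val) hk), PNat.coe_toPNat']

section DifferentialOperators

open MvPolynomial

variable {R σ : Type*} [CommRing R]

/-- Multiplication by the variable `X v` as an operator on polynomials. -/
noncomputable abbrev mulX (R : Type*) [CommRing R] {σ : Type*} (v : σ) :
    Module.End R (MvPolynomial σ R) :=
  LinearMap.mulLeft R (X v)

/-- Commutation `L ↦ ⁅X v, L⁆` with the multiplication by `X v`. -/
noncomputable def lieMulX (R : Type*) [CommRing R] {σ : Type*} (v : σ) :
    Module.End R (Module.End R (MvPolynomial σ R)) :=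
  LinearMap.mulLeft R (mulX R v) - LinearMap.mulRight R (mulX R v)

lemma lieMulX_apply (v : σ) (L : Module.End R (MvPolynomial σ R)) :
    lieMulX R v L = ⁅mulX R v, L⁆ :=
  rfl

/-- The differential operators of order at most `m` on `R[X_v : v ∈ σ]`, in Grothendieck's sense:
an operator has order `0` if it commutes with multiplication by every variable, and order at most
`m + 1` if its commutators with these multiplications have order at most `m`. -/
noncomputable def diffOp (R σ : Type*) [CommRing R] :
    ℕ → Submodule R (Module.End R (MvPolynomial σ R))
  | 0 => ⨅ v : σ, LinearMap.ker (lieMulX R v)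
  | m + 1 => ⨅ v : σ, (diffOp R σ m).comap (lieMulX R v)

lemma mem_diffOp_zero {L : Module.End R (MvPolynomial σ R)} :
    L ∈ diffOp R σ 0 ↔ ∀ v : σ, ⁅mulX R v, L⁆ = 0 := by
  simp only [diffOp, Submodule.mem_iInf, LinearMap.mem_ker, lieMulX_apply]

lemma mem_diffOp_succ {m : ℕ} {L : Module.End R (MvPolynomial σ R)} :
    L ∈ diffOp R σ (m + 1) ↔ ∀ v : σ, ⁅mulX R v, L⁆ ∈ diffOp R σ m := by
  simp only [diffOp, Submodule.mem_iInf, Submodule.mem_comap, lieMulX_apply]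

lemma diffOp_mono : Monotone (diffOp R σ) := by
  refine monotone_nat_of_le_succ fun m => ?_
  induction m with
  | zero =>
    intro L hL
    rw [mem_diffOp_succ]
    intro v
    rw [mem_diffOp_zero.mp hL v]
    exact zero_mem _
  | succ m ih =>
    intro L hL
    rw [mem_diffOp_succ] at hL ⊢
    exact fun v => ih (hL v)

lemma lie_mul_leibniz {A : Type*} [Ring A] (x a b : A) : ⁅x, a * b⁆ = ⁅x, a⁆ * b + a * ⁅x, b⁆ := by
  simp only [Ring.lie_def]
  noncomm_ring

lemma mul_mem_diffOp {a b : ℕ} {A B : Module.End R (MvPolynomial σ R)}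
    (hA : A ∈ diffOp R σ a) (hB : B ∈ diffOp R σ b) : A * B ∈ diffOp R σ (a + b) := by
  induction hs : a + b generalizing a b A B with
  | zero =>
    obtain ⟨rfl, rfl⟩ : a = 0 ∧ b = 0 := by omega
    rw [mem_diffOp_zero] at hA hB ⊢
    intro v
    rw [lie_mul_leibniz, hA, hB, zero_mul, mul_zero, add_zero]
  | succ s ih =>
    rw [mem_diffOp_succ]
    intro v
    rw [lie_mul_leibniz]
    refine add_mem ?_ ?_
    · cases a with
      | zero => rw [mem_diffOp_zero.mp hA v, zero_mul]; exact zero_mem _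
      | succ a => exact ih (mem_diffOp_succ.mp hA v) hB (by omega)
    · cases b with
      | zero => rw [mem_diffOp_zero.mp hB v, mul_zero]; exact zero_mem _
      | succ b => exact ih hA (mem_diffOp_succ.mp hB v) (by omega)

lemma mulLeft_mem_diffOp (P : MvPolynomial σ R) : LinearMap.mulLeft R P ∈ diffOp R σ 0 := by
  rw [mem_diffOp_zero]
  intro v
  rw [Ring.lie_def, Module.End.mul_eq_comp, Module.End.mul_eq_comp, ← LinearMap.mulLeft_mul,
    ← LinearMap.mulLeft_mul, mul_comm, sub_self]

lemma lie_mulLeft_derivation {A : Type*} [CommRing A] [Algebra R A] (D : Derivation R A A)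
    (a : A) : ⁅LinearMap.mulLeft R a, (D : Module.End R A)⁆ = LinearMap.mulLeft R (-D a) := by
  ext b
  simp only [Ring.lie_def, LinearMap.sub_apply, Module.End.mul_apply, LinearMap.mulLeft_apply,
    Derivation.coeFn_coe, Derivation.leibniz, smul_eq_mul]
  ring

lemma derivation_mem_diffOp (D : Derivation R (MvPolynomial σ R) (MvPolynomial σ R)) :
    (D : Module.End R (MvPolynomial σ R)) ∈ diffOp R σ 1 := by
  rw [mem_diffOp_succ]
  intro v
  rw [lie_mulLeft_derivation]
  exact mulLeft_mem_diffOp _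

/-- The monomial spelled by a finite word `u` in the variables. -/
noncomputable def wordMonomial (R : Type*) [CommRing R] {σ κ : Type*} [Fintype κ] (u : κ → σ) :
    MvPolynomial σ R :=
  ∏ j, X (u j)

lemma wordMonomial_cons {d : ℕ} (v : σ) (u : Fin d → σ) :
    wordMonomial R (Fin.cons v u : Fin (d + 1) → σ) = X v * wordMonomial R u := by
  simp [wordMonomial, Fin.prod_univ_succ]

lemma eq_zero_of_lie_mulX_eq_zero {L : Module.End R (MvPolynomial σ R)} (hone : L 1 = 0)
    (hlie : ∀ v : σ, ⁅mulX R v, L⁆ = 0) : L = 0 := by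
  have hX (v : σ) (P : MvPolynomial σ R) :
      X v * L P = L (X v * P) := by
    simpa [Ring.lie_def, sub_eq_zero] using LinearMap.congr_fun (hlie v) P
  refine LinearMap.ext fun P => ?_
  induction P using MvPolynomial.induction_on with
  | C a => rw [← mul_one (C a), ← smul_eq_C_mul, map_smul, hone, smul_zero, LinearMap.zero_apply]
  | add P Q hP hQ => rw [map_add, hP, hQ, map_add]
  | mul_X P v hP => rw [mul_comm, ← hX, hP, LinearMap.zero_apply, LinearMap.zero_apply, mul_zero]

lemma eq_zero_of_mem_diffOp {m : ℕ} {L : Module.End R (MvPolynomial σ R)} (hL : L ∈ diffOp R σ m)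
    (hword : ∀ d ≤ m, ∀ u : Fin d → σ, L (wordMonomial R u) = 0) : L = 0 := by
  have hone : L 1 = 0 := by
    simpa [wordMonomial] using hword 0 (Nat.zero_le m) Fin.elim0
  refine eq_zero_of_lie_mulX_eq_zero hone fun v => ?_
  cases m with
  | zero => exact mem_diffOp_zero.mp hL v
  | succ m =>
    refine eq_zero_of_mem_diffOp (mem_diffOp_succ.mp hL v) fun d hd u => ?_
    rw [Ring.lie_def, LinearMap.sub_apply, Module.End.mul_apply, Module.End.mul_apply,
      hword d (by omega), LinearMap.mulLeft_apply, LinearMap.mulLeft_apply, ← wordMonomial_cons,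
      hword (d + 1) (by omega), mul_zero, sub_zero]

/-- The composition `∂/∂X_{v₁} ⋯ ∂/∂X_{v_n}` of partial derivatives along the list `v₁, …, v_n`. -/
noncomputable def iteratedPderiv (R : Type*) [CommRing R] {σ : Type*} (l : List σ) :
    Module.End R (MvPolynomial σ R) :=
  (l.map fun v => (pderiv v).toLinearMap).prod

lemma iteratedPderiv_apply (l : List σ) (P : MvPolynomial σ R) :
    iteratedPderiv R l P = l.foldr (fun v => pderiv v) P := by
  induction l with
  | nil => simp [iteratedPderiv]
  | cons v l ih => simpa [iteratedPderiv] using congrArg (pderiv v) ih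

lemma iteratedPderiv_mem_diffOp (l : List σ) : iteratedPderiv R l ∈ diffOp R σ l.length := by
  induction l with
  | nil =>
    rw [iteratedPderiv, List.map_nil, List.prod_nil, Module.End.one_eq_id, ← LinearMap.mulLeft_one]
    exact mulLeft_mem_diffOp 1
  | cons v l ih =>
    rw [List.length_cons, add_comm]
    exact mul_mem_diffOp (derivation_mem_diffOp _) ih

end DifferentialOperators

section WordMonomials

open MvPolynomial

variable {R σ κ : Type*} [CommRing R]

lemma pderiv_prod_X [DecidableEq σ] [DecidableEq κ] (w : σ) (u : κ → σ) (s : Finset κ) :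
    pderiv w (∏ j ∈ s, X (u j) : MvPolynomial σ R) =
      ∑ j ∈ s, if u j = w then ∏ k ∈ s.erase j, X (u k) else 0 := by
  induction s using Finset.induction_on with
  | empty => simp
  | insert a s ha ih =>
    rw [Finset.prod_insert ha, Derivation.leibniz, ih, Finset.sum_insert ha,
      Finset.erase_insert ha, pderiv_X, smul_eq_mul, smul_eq_mul, Finset.mul_sum, add_comm]
    congr 1
    · simp [Pi.single_apply, eq_comm]
    · refine Finset.sum_congr rfl fun j hj => ?_
      have hja : j ≠ a := ne_of_mem_of_not_mem hj ha
      rw [Finset.erase_insert_of_ne hja.symm,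
        Finset.prod_insert fun h => ha (Finset.mem_of_mem_erase h), mul_ite, mul_zero]

variable [Fintype κ] [DecidableEq κ]

lemma iteratedPderiv_wordMonomial [DecidableEq σ] (u : κ → σ) {n : ℕ} (v : Fin n → σ) :
    iteratedPderiv R (List.ofFn v) (wordMonomial R u) =
      ∑ ι : Fin n ↪ κ, if ∀ i, u (ι i) = v i then ∏ j ∈ (Finset.univ.map ι)ᶜ, X (u j) else 0 := by
  induction n with
  | zero => simp [iteratedPderiv, wordMonomial]
  | succ n ih =>
    have hcons (P : MvPolynomial σ R) : iteratedPderiv R (List.ofFn v) P =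
        pderiv (v 0) (iteratedPderiv R (List.ofFn fun i => v i.succ) P) := by
      simp only [iteratedPderiv_apply, List.ofFn_succ, List.foldr_cons]
    rw [hcons, ih, map_sum, ← (Equiv.embeddingFinSucc n κ).symm.sum_comp, Fintype.sum_sigma]
    refine Finset.sum_congr rfl fun ι _ => ?_
    simp only [Equiv.coe_embeddingFinSucc_symm, Fin.forall_fin_succ, Fin.cons_zero, Fin.cons_succ]
    by_cases h : ∀ i, u (ι i) = v i.succ
    · simp only [h, implies_true, if_true, and_true, pderiv_prod_X]
      rw [Finset.sum_subtype (p := fun i => i ∉ Set.range ι) _ (by simp)]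
      refine Finset.sum_congr rfl fun j _ =>
        if_congr Iff.rfl (Finset.prod_congr ?_ fun _ _ => rfl) rfl
      ext k
      simp [Fin.exists_fin_succ, eq_comm]
    · simp only [h, if_false, and_false, map_zero, Finset.sum_const_zero]

end WordMonomials

section Twist

open MvPolynomial

variable {R α β κ μ : Type*} [CommRing R]

/-- Let a permutation `h` move the first letters of a word in the alphabet `α × β`, keeping the
second letters in place. -/
def twist (h : Equiv.Perm κ) (u : κ → α × β) : κ → α × β :=
  fun j => ((u (h⁻¹ j)).1, (u j).2)

lemma twist_twist (h k : Equiv.Perm κ) (u : κ → α × β) : twist h (twist k u) = twist (h * k) u := by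
  ext j <;> simp [twist]

variable [DecidableEq κ]

lemma inv_viaFintypeEmbedding [Fintype μ] (g : Equiv.Perm μ) (ι : μ ↪ κ) :
    (g.viaFintypeEmbedding ι)⁻¹ = g⁻¹.viaFintypeEmbedding ι :=
  Equiv.Perm.extendDomain_inv g ι.toEquivRange

variable [Fintype κ]

lemma wordMonomial_twist_viaFintypeEmbedding [Fintype μ] (g : Equiv.Perm μ) (ι : μ ↪ κ)
    (u : κ → α × β) :
    wordMonomial R (twist (g.viaFintypeEmbedding ι) u) =
      (∏ i, X ((u (ι (g⁻¹ i))).1, (u (ι i)).2)) * ∏ j ∈ (Finset.univ.map ι)ᶜ, X (u j) := by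
  rw [wordMonomial, ← Finset.prod_mul_prod_compl (Finset.univ.map ι), Finset.prod_map]
  congr 1
  · refine Finset.prod_congr rfl fun i _ => ?_
    rw [twist, inv_viaFintypeEmbedding, Equiv.Perm.viaFintypeEmbedding_apply_image]
  · refine Finset.prod_congr rfl fun j hj => ?_
    rw [twist, inv_viaFintypeEmbedding,
      Equiv.Perm.viaFintypeEmbedding_apply_notMem_range _ _ (by simpa using hj)]

variable [Fintype α] [Fintype β]

/-- The normally ordered operator `∑ₐ :D_{a₁ a_{g(1)}} ⋯ D_{aₙ a_{g(n)}}:` attached to a permutation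
`g`, where `D_{ab} = ∑ₑ X_{ae} ∂/∂X_{be}`. -/
noncomputable def permOp (R α β : Type*) [CommRing R] [Fintype α] [Fintype β] {n : ℕ}
    (g : Equiv.Perm (Fin n)) : Module.End R (MvPolynomial (α × β) R) :=
  ∑ a : Fin n → α, ∑ e : Fin n → β,
    LinearMap.mulLeft R (∏ i, X (a i, e i)) *
      iteratedPderiv R (List.ofFn fun i => (a (g i), e i))

lemma permOp_mem_diffOp {n : ℕ} (g : Equiv.Perm (Fin n)) :
    permOp R α β g ∈ diffOp R (α × β) n := by
  refine sum_mem fun a _ => sum_mem fun e _ => ?_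
  simpa only [List.length_ofFn, zero_add] using
    mul_mem_diffOp (mulLeft_mem_diffOp (∏ i, X (a i, e i)))
      (iteratedPderiv_mem_diffOp (R := R) (List.ofFn fun i => (a (g i), e i)))

lemma permOp_wordMonomial {n : ℕ} (g : Equiv.Perm (Fin n)) (u : κ → α × β) :
    permOp R α β g (wordMonomial R u) =
      ∑ ι : Fin n ↪ κ, wordMonomial R (twist (g.viaFintypeEmbedding ι) u) := by
  have hletters (ι : Fin n ↪ κ) (a : Fin n → α) (e : Fin n → β) :
      (∀ i, u (ι i) = (a (g i), e i)) ↔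
        a = (fun i => (u (ι (g⁻¹ i))).1) ∧ e = fun i => (u (ι i)).2 := by
    constructor
    · exact fun h => ⟨funext fun i => by simp [h], funext fun i => by simp [h]⟩
    · rintro ⟨rfl, rfl⟩ i
      simp
  simp only [permOp, LinearMap.sum_apply, Module.End.mul_apply, LinearMap.mulLeft_apply,
    iteratedPderiv_wordMonomial, Finset.mul_sum, hletters, ite_and, mul_ite, mul_zero]
  rw [Finset.sum_congr rfl fun a _ => Finset.sum_comm, Finset.sum_comm]
  simp [wordMonomial_twist_viaFintypeEmbedding]

end Twist

section TwistSum

open MvPolynomial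

variable {R α β κ : Type*} [CommRing R] [Fintype κ] [DecidableEq κ]

/-- The combination `∑ₕ x_h · X^{h·u}` of the monomials spelled by the twists of a word `u`, with
coefficients taken from a group algebra element `x = ∑ₕ x_h h`. -/
noncomputable def twistSum (u : κ → α × β) :
    MonoidAlgebra R (Equiv.Perm κ) →ₗ[R] MvPolynomial (α × β) R where
  toFun x := ∑ h, x.coeff h • wordMonomial R (twist h u)
  map_add' x y := by simp [add_smul, Finset.sum_add_distrib]
  map_smul' r x := by simp [mul_smul, Finset.smul_sum]

lemma twistSum_apply (u : κ → α × β) (x : MonoidAlgebra R (Equiv.Perm κ)) :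
    twistSum u x = ∑ h, x.coeff h • wordMonomial R (twist h u) :=
  rfl

lemma twistSum_single (u : κ → α × β) (h : Equiv.Perm κ) (r : R) :
    twistSum u (MonoidAlgebra.single h r) = r • wordMonomial R (twist h u) := by
  rw [twistSum_apply, Finset.sum_eq_single h] <;> simp +contextual [eq_comm]

lemma twistSum_mul_single (u : κ → α × β) (x : MonoidAlgebra R (Equiv.Perm κ)) (k : Equiv.Perm κ)
    (r : R) : twistSum u (x * MonoidAlgebra.single k r) = r • twistSum (twist k u) x := by
  induction x using MonoidAlgebra.induction_linear with
  | zero => simp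
  | add x y hx hy => rw [add_mul, map_add, map_add, hx, hy, smul_add]
  | single h s =>
    rw [MonoidAlgebra.single_mul_single, twistSum_single, twistSum_single, twist_twist, smul_smul,
      mul_comm]

lemma map_twistSum {L : Module.End R (MvPolynomial (α × β) R)}
    {x : MonoidAlgebra R (Equiv.Perm κ)}
    (hL : ∀ u : κ → α × β, L (wordMonomial R u) = twistSum u x)
    (u : κ → α × β) (y : MonoidAlgebra R (Equiv.Perm κ)) :
    L (twistSum u y) = twistSum u (x * y) := by
  induction y using MonoidAlgebra.induction_linear with
  | zero => simp
  | add y z hy hz => rw [mul_add, map_add, map_add, map_add, hy, hz]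
  | single k r => rw [twistSum_single, map_smul, hL, twistSum_mul_single]

end TwistSum

section CycleTypes

variable {n d : ℕ}

lemma fullCycleType_eq_parts_partition (g : Equiv.Perm (Fin n)) :
    fullCycleType g = g.partition.parts := by
  rw [fullCycleType, Equiv.Perm.parts_partition, Equiv.Perm.sum_cycleType, Fintype.card_fin]

lemma fullCycleType_eq_iff_isConj {g h : Equiv.Perm (Fin n)} :
    fullCycleType g = fullCycleType h ↔ IsConj g h := by
  rw [fullCycleType_eq_parts_partition, fullCycleType_eq_parts_partition, ← Nat.Partition.ext_iff,
    Equiv.Perm.partition_eq_of_isConj]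

/-- The full cycle type of a permutation of `Fin n` as a partition of `n`. -/
noncomputable def cyclePartition (g : Equiv.Perm (Fin n)) : n.Partition where
  parts := fullCycleType g
  parts_pos hi := g.partition.parts_pos (fullCycleType_eq_parts_partition g ▸ hi)
  parts_sum := by
    rw [fullCycleType_eq_parts_partition, g.partition.parts_sum, Fintype.card_fin]

lemma cyclePartition_eq_iff {g : Equiv.Perm (Fin n)} {Δ : n.Partition} :
    cyclePartition g = Δ ↔ fullCycleType g = Δ.parts :=
  Nat.Partition.ext_iff

lemma cyclePartition_eq_iff_isConj {g h : Equiv.Perm (Fin n)} :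
    cyclePartition g = cyclePartition h ↔ IsConj g h :=
  cyclePartition_eq_iff.trans fullCycleType_eq_iff_isConj

lemma filter_two_le_add_replicate_one (Δ : n.Partition) :
    Δ.parts.filter (2 ≤ ·) + Multiset.replicate (Δ.parts.count 1) 1 = Δ.parts := by
  rw [← Multiset.filter_eq']
  conv_rhs => rw [← Multiset.filter_add_not (2 ≤ ·) Δ.parts]
  congr 1
  refine Multiset.filter_congr fun k hk => ?_
  have := Δ.parts_pos hk
  omega

lemma exists_fullCycleType_eq (Δ : n.Partition) :
    ∃ g : Equiv.Perm (Fin n), fullCycleType g = Δ.parts := by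
  have hparts := filter_two_le_add_replicate_one Δ
  have hsum : (Δ.parts.filter (2 ≤ ·)).sum + Δ.parts.count 1 = n := by
    simpa [Δ.parts_sum] using congrArg Multiset.sum hparts
  obtain ⟨g, hg⟩ := (Equiv.Perm.exists_with_cycleType_iff (Fin n)).mpr
    ⟨(Nat.le.intro hsum).trans_eq (Fintype.card_fin n).symm,
      fun k hk => (Multiset.mem_filter.mp hk).2⟩
  refine ⟨g, ?_⟩
  rw [fullCycleType, hg, ← Nat.eq_sub_of_add_eq' hsum, hparts]

/-- A permutation of `Fin n` of full cycle type `Δ`. -/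
noncomputable def cycleRep (Δ : n.Partition) : Equiv.Perm (Fin n) :=
  (exists_fullCycleType_eq Δ).choose

lemma fullCycleType_cycleRep (Δ : n.Partition) : fullCycleType (cycleRep Δ) = Δ.parts :=
  (exists_fullCycleType_eq Δ).choose_spec

lemma cyclePartition_cycleRep (Δ : n.Partition) : cyclePartition (cycleRep Δ) = Δ :=
  cyclePartition_eq_iff.mpr (fullCycleType_cycleRep Δ)

lemma cyclePartition_surjective : Function.Surjective (cyclePartition (n := n)) :=
  fun Δ => ⟨cycleRep Δ, cyclePartition_cycleRep Δ⟩

end CycleTypes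

section Embeddings

variable {α β : Type*} [Fintype α] [DecidableEq β]

lemma viaFintypeEmbedding_trans_perm (g : Equiv.Perm α) (ι : α ↪ β) (τ : Equiv.Perm β) :
    g.viaFintypeEmbedding (ι.trans τ.toEmbedding) = τ * g.viaFintypeEmbedding ι * τ⁻¹ := by
  rw [eq_mul_inv_iff_mul_eq]
  ext1 j
  rw [Equiv.Perm.mul_apply, Equiv.Perm.mul_apply]
  by_cases hj : j ∈ Set.range ι
  · obtain ⟨i, rfl⟩ := hj
    rw [Equiv.Perm.viaFintypeEmbedding_apply_image]
    exact Equiv.Perm.viaFintypeEmbedding_apply_image g (ι.trans τ.toEmbedding) i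
  · have hτj : τ j ∉ Set.range (ι.trans τ.toEmbedding) := by
      rintro ⟨i, hi⟩
      exact hj ⟨i, τ.injective hi⟩
    rw [Equiv.Perm.viaFintypeEmbedding_apply_notMem_range _ _ hj,
      Equiv.Perm.viaFintypeEmbedding_apply_notMem_range _ _ hτj]

variable [Fintype β]

lemma card_viaFintypeEmbedding_eq_of_isConj (g : Equiv.Perm α) {h k : Equiv.Perm β}
    (hhk : IsConj h k) :
    Fintype.card {ι : α ↪ β // g.viaFintypeEmbedding ι = h} =
      Fintype.card {ι : α ↪ β // g.viaFintypeEmbedding ι = k} := by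
  obtain ⟨τ, rfl⟩ := isConj_iff.mp hhk
  refine Fintype.card_congr ((Equiv.embeddingCongr (Equiv.refl α) τ).subtypeEquiv fun ι => ?_)
  have htrans : Equiv.embeddingCongr (Equiv.refl α) τ ι = ι.trans τ.toEmbedding := rfl
  rw [htrans, viaFintypeEmbedding_trans_perm, mul_left_inj, mul_right_inj]

variable [DecidableEq α]

lemma cycleType_viaFintypeEmbedding (g : Equiv.Perm α) (ι : α ↪ β) :
    (g.viaFintypeEmbedding ι).cycleType = g.cycleType :=
  Equiv.Perm.cycleType_extendDomain _

lemma card_isConj_mul_card_viaFintypeEmbedding_eq {g : Equiv.Perm α} {h : Equiv.Perm β}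
    (hgh : h.cycleType = g.cycleType) :
    Nat.card {k : Equiv.Perm β | IsConj h k} *
        Fintype.card {ι : α ↪ β // g.viaFintypeEmbedding ι = h} =
      (Fintype.card β).descFactorial (Fintype.card α) := by
  have hconj (ι : α ↪ β) : IsConj h (g.viaFintypeEmbedding ι) := by
    rw [Equiv.Perm.isConj_iff_cycleType_eq, cycleType_viaFintypeEmbedding, hgh]
  let toClass (ι : α ↪ β) : {k : Equiv.Perm β | IsConj h k} := ⟨_, hconj ι⟩
  rw [← Fintype.card_embedding_eq, ← Fintype.card_congr (Equiv.sigmaFiberEquiv toClass),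
    Fintype.card_sigma, Nat.card_eq_fintype_card, ← smul_eq_mul, ← Finset.card_univ,
    ← Finset.sum_const]
  refine Finset.sum_congr rfl fun k _ => ?_
  rw [card_viaFintypeEmbedding_eq_of_isConj g k.2]
  exact Fintype.card_congr
    (Equiv.subtypeEquivRight fun ι => (Subtype.ext_iff (a1 := toClass ι)).symm)

end Embeddings

section Kappa

variable {n d : ℕ}

lemma kappa_eq_of_toFinset_subset {p : Multiset ℕ} {s : Finset ℕ} (hps : p.toFinset ⊆ s) :
    kappa p = (∏ k ∈ s, ((p.count k).factorial * (k : ℚ) ^ p.count k))⁻¹ := by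
  rw [kappa, Finset.prod_subset hps fun k _ hk => ?_]
  rw [Multiset.count_eq_zero_of_notMem (mt Multiset.mem_toFinset.mpr hk)]
  simp

lemma kappa_add_replicate_one (p : Multiset ℕ) (k : ℕ) :
    kappa (p + Multiset.replicate k 1) * (p.count 1 + k).factorial =
      kappa p * (p.count 1).factorial := by
  have hsub : (p + Multiset.replicate k 1).toFinset ⊆ insert 1 p.toFinset := by
    intro i hi
    simp only [Multiset.mem_toFinset, Multiset.mem_add, Multiset.mem_replicate] at hi
    simp only [Finset.mem_insert, Multiset.mem_toFinset]
    tauto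
  have hcount : ∀ i ∈ (insert 1 p.toFinset).erase 1,
      (p + Multiset.replicate k 1).count i = p.count i := by
    intro i hi
    rw [Multiset.count_add, Multiset.count_replicate, if_neg (Finset.ne_of_mem_erase hi).symm,
      add_zero]
  rw [kappa_eq_of_toFinset_subset hsub, kappa_eq_of_toFinset_subset (Finset.subset_insert 1 _),
    ← Finset.mul_prod_erase _ _ (Finset.mem_insert_self 1 _),
    ← Finset.mul_prod_erase _ _ (Finset.mem_insert_self 1 _),
    Finset.prod_congr rfl fun i hi => by rw [hcount i hi]]
  simp only [Multiset.count_add, Multiset.count_replicate_self, Nat.cast_one, one_pow, mul_one,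
    mul_inv]
  have hfac (m : ℕ) : (m.factorial : ℚ) ≠ 0 := Nat.cast_ne_zero.mpr m.factorial_ne_zero
  rw [mul_right_comm, inv_mul_cancel₀ (hfac _), mul_right_comm, inv_mul_cancel₀ (hfac _)]

lemma kappa_fullCycleType (h : Equiv.Perm (Fin d)) :
    kappa (fullCycleType h) = (((d - h.cycleType.sum).factorial * h.cycleType.prod *
      ∏ k ∈ h.cycleType.toFinset, (h.cycleType.count k).factorial : ℕ) : ℚ)⁻¹ := by
  have hone : h.cycleType.count 1 = 0 :=
    Multiset.count_eq_zero_of_notMem fun h1 =>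
      absurd (Equiv.Perm.two_le_of_mem_cycleType h1) (by decide)
  have hkappa := kappa_add_replicate_one h.cycleType (d - h.cycleType.sum)
  rw [hone, zero_add, Nat.factorial_zero, Nat.cast_one, mul_one] at hkappa
  rw [fullCycleType, eq_div_of_mul_eq (Nat.cast_ne_zero.mpr (Nat.factorial_ne_zero _)) hkappa,
    kappa, Finset.prod_multiset_count, Finset.prod_mul_distrib]
  push_cast
  rw [div_eq_mul_inv, ← mul_inv]
  ring

lemma card_isConj_eq_factorial_mul_kappa (h : Equiv.Perm (Fin d)) :
    (Nat.card {k : Equiv.Perm (Fin d) | IsConj h k} : ℚ) =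
      d.factorial * kappa (fullCycleType h) := by
  have hcard := Equiv.Perm.card_isConj_mul_eq h
  rw [Fintype.card_fin] at hcard
  have hne := right_ne_zero_of_mul (hcard.trans_ne d.factorial_ne_zero)
  rw [kappa_fullCycleType, eq_mul_inv_iff_mul_eq₀ (Nat.cast_ne_zero.mpr hne)]
  exact_mod_cast hcard

lemma fullCycleType_viaFintypeEmbedding (g : Equiv.Perm (Fin n)) (ι : Fin n ↪ Fin d) :
    fullCycleType (g.viaFintypeEmbedding ι) = fullCycleType g + Multiset.replicate (d - n) 1 := by
  have hsum : g.cycleType.sum ≤ n := by simpa using g.sum_cycleType_le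
  have hnd : n ≤ d := by simpa using Fintype.card_le_of_embedding ι
  rw [fullCycleType, cycleType_viaFintypeEmbedding, fullCycleType, add_assoc,
    ← Multiset.replicate_add, show d - g.cycleType.sum = n - g.cycleType.sum + (d - n) by omega]

lemma kappa_mul_card_viaFintypeEmbedding_eq (hnd : n ≤ d) {g : Equiv.Perm (Fin n)}
    {h : Equiv.Perm (Fin d)}
    (hgh : fullCycleType h = fullCycleType g + Multiset.replicate (d - n) 1) :
    kappa (fullCycleType g) * Fintype.card {ι : Fin n ↪ Fin d // g.viaFintypeEmbedding ι = h} =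
      ((fullCycleType g).count 1 + (d - n)).factorial /
        (((fullCycleType g).count 1).factorial * (d - n).factorial) := by
  have hfac (m : ℕ) : (m.factorial : ℚ) ≠ 0 := Nat.cast_ne_zero.mpr m.factorial_ne_zero
  have hcycle : h.cycleType = g.cycleType := by
    obtain ⟨ι⟩ : Nonempty (Fin n ↪ Fin d) := ⟨Fin.castLEEmb hnd⟩
    rw [← fullCycleType_viaFintypeEmbedding g ι, fullCycleType_eq_iff_isConj,
      Equiv.Perm.isConj_iff_cycleType_eq] at hgh
    rw [hgh, cycleType_viaFintypeEmbedding]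
  have hcount := congrArg (Nat.cast (R := ℚ)) (card_isConj_mul_card_viaFintypeEmbedding_eq hcycle)
  have hdesc := congrArg (Nat.cast (R := ℚ)) (Nat.factorial_mul_descFactorial hnd)
  rw [Fintype.card_fin, Fintype.card_fin, Nat.cast_mul, card_isConj_eq_factorial_mul_kappa]
    at hcount
  rw [Nat.cast_mul, ← hcount] at hdesc
  have hkappa := kappa_add_replicate_one (fullCycleType g) (d - n)
  rw [← hgh] at hkappa
  set c : ℚ := (Fintype.card {ι : Fin n ↪ Fin d // g.viaFintypeEmbedding ι = h} : ℚ)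
  have hcard : (d - n).factorial * (kappa (fullCycleType h) * c) = 1 :=
    mul_left_cancel₀ (hfac d) (by linear_combination hdesc)
  rw [eq_div_iff (mul_ne_zero (hfac _) (hfac _))]
  linear_combination -(c * (d - n).factorial) * hkappa +
    ((fullCycleType g).count 1 + (d - n)).factorial * hcard

end Kappa

section GroupAlgebraCenter

variable {R G : Type*} [CommSemiring R] [Group G]

lemma mem_center_iff_coeff_eq_of_isConj {x : MonoidAlgebra R G} :
    x ∈ Subalgebra.center R (MonoidAlgebra R G) ↔
      ∀ g h : G, IsConj g h → x.coeff g = x.coeff h := by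
  have hcomm (k : G) (r : R) (g : G) :
      (MonoidAlgebra.single k r * x).coeff (k * g) = r * x.coeff g ∧
        (x * MonoidAlgebra.single k r).coeff (k * g) = x.coeff (k * g * k⁻¹) * r := by
    simp
  rw [Subalgebra.mem_center_iff]
  constructor
  · intro hx g h hgh
    obtain ⟨k, rfl⟩ := isConj_iff.mp hgh
    have hk := congrArg (fun y => y.coeff (k * g)) (hx (MonoidAlgebra.single k 1))
    simpa only [(hcomm k 1 g).1, (hcomm k 1 g).2, one_mul, mul_one] using hk
  · intro hx y
    induction y using MonoidAlgebra.induction_linear with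
    | zero => simp
    | add y z hy hz => rw [add_mul, mul_add, hy, hz]
    | single k r =>
      ext g
      obtain ⟨g, rfl⟩ : ∃ g', g = k * g' := ⟨k⁻¹ * g, by simp⟩
      rw [(hcomm k r g).1, (hcomm k r g).2, mul_comm, hx g (k * g * k⁻¹) (isConj_iff.mpr ⟨k, rfl⟩)]

end GroupAlgebraCenter

section ClassSums

variable {n d : ℕ}

lemma coeff_classSum (Δ : n.Partition) (h : Equiv.Perm (Fin n)) :
    (classSum n Δ).coeff h = if cyclePartition h = Δ then 1 else 0 := by
  simp [classSum, MonoidAlgebra.coeff_sum, Finset.sum_apply', Finsupp.single_apply,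
    cyclePartition_eq_iff]

lemma embedCenter_eq_linearCombination (x : n.Partition → ℚ) :
    embedCenter x = Fintype.linearCombination ℚ (classSum n) x :=
  rfl

lemma coeff_embedCenter (x : n.Partition → ℚ) (h : Equiv.Perm (Fin n)) :
    (embedCenter x).coeff h = x (cyclePartition h) := by
  simp [embedCenter, MonoidAlgebra.coeff_sum, Finset.sum_apply', coeff_classSum]

lemma embedCenter_mem_center (x : n.Partition → ℚ) :
    embedCenter x ∈ Subalgebra.center ℚ (MonoidAlgebra ℚ (Equiv.Perm (Fin n))) := by
  refine mem_center_iff_coeff_eq_of_isConj.mpr fun g h hgh => ?_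
  rw [coeff_embedCenter, coeff_embedCenter, cyclePartition_eq_iff_isConj.mpr hgh]

lemma embedCenter_classCoeff {x : MonoidAlgebra ℚ (Equiv.Perm (Fin n))}
    (hx : x ∈ Subalgebra.center ℚ (MonoidAlgebra ℚ (Equiv.Perm (Fin n)))) :
    embedCenter (classCoeff x) = x := by
  ext h
  have hconst : ∀ g ∈ Finset.univ.filter fun g => fullCycleType g = fullCycleType h,
      x.coeff g = x.coeff h := fun g hg =>
    mem_center_iff_coeff_eq_of_isConj.mp hx g h
      (fullCycleType_eq_iff_isConj.mp (Finset.mem_filter.mp hg).2)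
  have hcard : (Finset.univ.filter fun g => fullCycleType g = fullCycleType h).card ≠ 0 :=
    Finset.card_ne_zero_of_mem (Finset.mem_filter.mpr ⟨Finset.mem_univ h, rfl⟩)
  rw [coeff_embedCenter, classCoeff, cyclePartition, Finset.sum_congr rfl hconst,
    Finset.sum_const, nsmul_eq_mul, mul_div_cancel_left₀ _ (Nat.cast_ne_zero.mpr hcard)]

lemma embedCenter_circ (x y : n.Partition → ℚ) :
    embedCenter (circ x y) = embedCenter x * embedCenter y :=
  embedCenter_classCoeff (mul_mem (embedCenter_mem_center x) (embedCenter_mem_center y))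

lemma embedCenter_injective : Function.Injective (embedCenter (n := n)) := by
  intro x y hxy
  refine funext (cyclePartition_surjective.forall.mpr fun h => ?_)
  rw [← coeff_embedCenter x h, hxy, coeff_embedCenter]

end ClassSums

section Padding

variable {n d : ℕ}

lemma rhoTo_diagC (Δ : n.Partition) (Λ : d.Partition) :
    rhoTo d (diagC Δ) Λ =
      if n ≤ d ∧ Λ.parts = Δ.parts + Multiset.replicate (d - n) 1 then
        ((Δ.parts.count 1 + (d - n)).factorial : ℚ) /
          ((Δ.parts.count 1).factorial * (d - n).factorial)
      else 0 := by
  rw [rhoTo, ite_and, Finset.sum_eq_single Δ]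
  · simp only [diagC, if_true, mul_one]
  · intro Δ' _ hΔ'
    rw [diagC, if_neg hΔ', mul_zero, ite_self]
  · simp

lemma rhoTo_eq_sum (d : ℕ) (x : n.Partition → ℚ) :
    rhoTo d x = ∑ Δ, x Δ • rhoTo d (diagC Δ) := by
  ext Λ
  simp only [Finset.sum_apply, Pi.smul_apply, rhoTo_diagC, smul_eq_mul]
  rw [rhoTo]
  by_cases hnd : n ≤ d
  · simp only [hnd, if_true, true_and, mul_ite, mul_zero, mul_comm]
  · simp only [hnd, if_false, false_and, mul_zero, Finset.sum_const_zero]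

lemma rhoTo_of_lt (hdn : d < n) (x : n.Partition → ℚ) : rhoTo d x = 0 := by
  ext Λ
  rw [rhoTo, if_neg hdn.not_ge, Pi.zero_apply]

lemma rhoTo_self (x : n.Partition → ℚ) : rhoTo n x = x := by
  have hdiag (Δ : n.Partition) : rhoTo n (diagC Δ) = diagC Δ := by
    ext Λ
    have hfac := Nat.cast_ne_zero (R := ℚ).mpr (Δ.parts.count 1).factorial_ne_zero
    simp [rhoTo_diagC, diagC, Nat.Partition.ext_iff, div_self hfac]
  ext Λ
  rw [rhoTo_eq_sum]
  simp only [hdiag]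
  simp [diagC]

lemma circ_eq_zero_of_left_or_right {x y : n.Partition → ℚ} (hxy : x = 0 ∨ y = 0) :
    circ x y = 0 := by
  rcases hxy with rfl | rfl <;> ext Λ <;> simp [circ, embedCenter, classCoeff]

lemma sum_rhoTo_bracket {n₁ n₂ : ℕ} (Δ₁ : n₁.Partition) (Δ₂ : n₂.Partition) (hd : d ≤ n₁ + n₂) :
    ∑ n ∈ Finset.Icc (max n₁ n₂) (n₁ + n₂), rhoTo d (bracket Δ₁ Δ₂ n) =
      circ (rhoTo d (diagC Δ₁)) (rhoTo d (diagC Δ₂)) := by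
  by_cases hm : max n₁ n₂ ≤ d
  · have hsub : Finset.Icc (max n₁ n₂) d ⊆ Finset.Icc (max n₁ n₂) (n₁ + n₂) :=
      Finset.Icc_subset_Icc_right hd
    rw [← Finset.sum_subset hsub, ← Finset.Ico_insert_right hm, Finset.sum_insert (by simp),
      rhoTo_self, bracket, if_pos ⟨hm, hd⟩,
      Finset.sum_attach (Finset.Ico (max n₁ n₂) d) (fun k => rhoTo d (bracket Δ₁ Δ₂ k)),
      sub_add_cancel]
    intro n hn hnd
    rw [Finset.mem_Icc] at hn hnd
    exact rhoTo_of_lt (by omega) _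
  · rw [circ_eq_zero_of_left_or_right
      ((lt_max_iff.mp (not_le.mp hm)).imp (rhoTo_of_lt · _) (rhoTo_of_lt · _))]
    refine Finset.sum_eq_zero fun n hn => rhoTo_of_lt ?_ _
    exact (not_le.mp hm).trans_le (Finset.mem_Icc.mp hn).1

lemma kappa_smul_sum_single_viaFintypeEmbedding (d : ℕ) {Δ : n.Partition}
    {g : Equiv.Perm (Fin n)} (hg : fullCycleType g = Δ.parts) :
    kappa Δ.parts • ∑ ι : Fin n ↪ Fin d, MonoidAlgebra.single (g.viaFintypeEmbedding ι) (1 : ℚ) =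
      embedCenter (rhoTo d (diagC Δ)) := by
  ext h
  have hcoeff : (kappa Δ.parts •
      ∑ ι : Fin n ↪ Fin d, MonoidAlgebra.single (g.viaFintypeEmbedding ι) (1 : ℚ)).coeff h =
        kappa (fullCycleType g) *
          Fintype.card {ι : Fin n ↪ Fin d // g.viaFintypeEmbedding ι = h} := by
    simp [hg, MonoidAlgebra.coeff_sum, Finsupp.single_apply, Fintype.card_subtype]
  rw [hcoeff, coeff_embedCenter, rhoTo_diagC, cyclePartition, ← hg]
  split_ifs with hnd
  · exact kappa_mul_card_viaFintypeEmbedding_eq hnd.1 hnd.2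
  · have : IsEmpty {ι : Fin n ↪ Fin d // g.viaFintypeEmbedding ι = h} := by
      refine ⟨fun ⟨ι, hι⟩ => hnd ⟨?_, ?_⟩⟩
      · simpa using Fintype.card_le_of_embedding ι
      · exact hι ▸ fullCycleType_viaFintypeEmbedding g ι
    rw [Fintype.card_eq_zero, Nat.cast_zero, mul_zero]

-- Triangularity: `rhoTo d (diagC Δ)` vanishes for `d < |Δ|` and is `Δ` itself for `d = |Δ|`.
lemma linearIndependent_rhoTo_diagC :
    LinearIndependent ℚ fun (D : Σ n : ℕ, n.Partition) (d : ℕ) => rhoTo d (diagC D.2) := by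
  rw [linearIndependent_iff']
  rintro s c hs ⟨n, Δ⟩ hΔ
  induction n using Nat.strong_induction_on with
  | _ n ih =>
    have hn := congrFun (congrFun hs n) Δ
    rw [Finset.sum_apply, Finset.sum_apply, Finset.sum_eq_single_of_mem _ hΔ] at hn
    · simpa [rhoTo_self, diagC] using hn
    · rintro ⟨m, Λ⟩ hΛ hne
      rcases lt_trichotomy m n with hmn | rfl | hmn
      · simp [ih m hmn Λ hΛ]
      · have hne' : Δ ≠ Λ := fun e => hne (by rw [e])
        simp [rhoTo_self, diagC, hne']
      · simp [rhoTo_of_lt hmn]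

end Padding

section MatrixOperators

variable {n : ℕ} (N : ℕ)

/-- The operator `𝒲_N(Δ)` as a linear endomorphism, computed from a chosen permutation of cycle
type `Δ`. -/
noncomputable def matrixW (Δ : n.Partition) : Module.End ℚ (RN N) :=
  kappa Δ.parts • permOp ℚ (Fin N) (Fin N) (cycleRep Δ)

lemma matrixW_apply (Δ : n.Partition) (P : RN N) :
    matrixW N Δ P = WN N Δ (cycleRep Δ) P := by
  simp only [matrixW, WN, NOpN, permOp, LinearMap.smul_apply, LinearMap.sum_apply,
    Module.End.mul_apply, LinearMap.mulLeft_apply, iteratedPderiv_apply]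

lemma matrixW_mem_diffOp (Δ : n.Partition) : matrixW N Δ ∈ diffOp ℚ (Fin N × Fin N) n :=
  Submodule.smul_mem _ _ (permOp_mem_diffOp _)

variable {N}

lemma matrixW_wordMonomial {d : ℕ} (Δ : n.Partition) (u : Fin d → Fin N × Fin N) :
    matrixW N Δ (wordMonomial ℚ u) = twistSum u (embedCenter (rhoTo d (diagC Δ))) := by
  rw [matrixW, LinearMap.smul_apply, permOp_wordMonomial,
    ← kappa_smul_sum_single_viaFintypeEmbedding d (fullCycleType_cycleRep Δ), map_smul, map_sum]
  simp only [twistSum_single, one_smul]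

lemma sum_smul_matrixW_wordMonomial {d : ℕ} (x : n.Partition → ℚ) (u : Fin d → Fin N × Fin N) :
    (∑ Δ, x Δ • matrixW N Δ) (wordMonomial ℚ u) = twistSum u (embedCenter (rhoTo d x)) := by
  rw [rhoTo_eq_sum]
  simp only [embedCenter_eq_linearCombination, map_sum, map_smul, LinearMap.sum_apply,
    LinearMap.smul_apply, matrixW_wordMonomial]

lemma matrixW_mul_wordMonomial {n₁ n₂ d : ℕ} (Δ₁ : n₁.Partition) (Δ₂ : n₂.Partition)
    (u : Fin d → Fin N × Fin N) :
    (matrixW N Δ₁ * matrixW N Δ₂) (wordMonomial ℚ u) =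
      twistSum u (embedCenter (circ (rhoTo d (diagC Δ₁)) (rhoTo d (diagC Δ₂)))) := by
  rw [Module.End.mul_apply, matrixW_wordMonomial, map_twistSum (matrixW_wordMonomial Δ₁),
    embedCenter_circ]

lemma matrixW_mul_matrixW {n₁ n₂ : ℕ} (Δ₁ : n₁.Partition) (Δ₂ : n₂.Partition) :
    matrixW N Δ₁ * matrixW N Δ₂ =
      ∑ n ∈ Finset.Icc (max n₁ n₂) (n₁ + n₂), ∑ Δ, bracket Δ₁ Δ₂ n Δ • matrixW N Δ := by
  have horder : ∑ n ∈ Finset.Icc (max n₁ n₂) (n₁ + n₂), ∑ Δ, bracket Δ₁ Δ₂ n Δ • matrixW N Δ ∈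
      diffOp ℚ (Fin N × Fin N) (n₁ + n₂) :=
    sum_mem fun n hn => sum_mem fun Δ _ => Submodule.smul_mem _ _
      (diffOp_mono (Finset.mem_Icc.mp hn).2 (matrixW_mem_diffOp N Δ))
  rw [← sub_eq_zero]
  refine eq_zero_of_mem_diffOp (sub_mem (mul_mem_diffOp (matrixW_mem_diffOp N Δ₁)
    (matrixW_mem_diffOp N Δ₂)) horder) fun d hd u => ?_
  rw [LinearMap.sub_apply, sub_eq_zero, matrixW_mul_wordMonomial, ← sum_rhoTo_bracket _ _ hd,
    LinearMap.sum_apply]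
  simp only [sum_smul_matrixW_wordMonomial, embedCenter_eq_linearCombination, map_sum]

end MatrixOperators

section DiagonalWords

open MvPolynomial

variable {R σ κ : Type*} [CommRing R] [Fintype κ]

/-- The exponent vector of the monomial spelled by a finite word. -/
noncomputable def wordExponent (u : κ → σ) : σ →₀ ℕ :=
  ∑ j, Finsupp.single (u j) 1

lemma wordMonomial_eq_monomial (u : κ → σ) :
    wordMonomial R u = monomial (wordExponent u) 1 :=
  (monomial_sum_one _ _).symm

lemma wordExponent_ne_zero_iff_mem_range (u : κ → σ) (v : σ) :
    wordExponent u v ≠ 0 ↔ v ∈ Set.range u := by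
  simp [wordExponent, Finsupp.single_apply]

-- A diagonal word can only be twisted into the monomial of `π` if it lists every letter once; this
-- relabelling then conjugates the twist into `π`.
lemma isConj_of_wordExponent_twist_eq {h π : Equiv.Perm κ} {c : κ → κ}
    (hexp : wordExponent (twist h fun j => (c j, c j)) = wordExponent (twist π fun j => (j, j))) :
    IsConj h π := by
  have hrange : Set.range (twist h fun j => (c j, c j)) = Set.range (twist π fun j => (j, j)) := by
    ext v
    rw [← wordExponent_ne_zero_iff_mem_range, hexp, wordExponent_ne_zero_iff_mem_range]
  have hsurj : Function.Surjective c := by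
    intro i
    obtain ⟨j, hj⟩ := hrange.ge ⟨i, rfl⟩
    exact ⟨j, congrArg Prod.snd hj⟩
  have hcomm (j : κ) : c (h⁻¹ j) = π⁻¹ (c j) := by
    obtain ⟨i, hi⟩ := hrange.le ⟨j, rfl⟩
    simp only [twist, Prod.mk.injEq] at hi
    rw [← hi.1, hi.2]
  let τ := Equiv.ofBijective c (Finite.surjective_iff_bijective.mp hsurj)
  have hτ : τ * h⁻¹ = π⁻¹ * τ := Equiv.ext hcomm
  refine isConj_iff.mpr ⟨τ, ?_⟩
  rw [mul_inv_eq_iff_eq_mul, ← inv_mul_eq_iff_eq_mul, ← mul_assoc, ← hτ, inv_mul_cancel_right]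

variable [DecidableEq κ]

lemma coeff_twistSum_diagonal {x : MonoidAlgebra R (Equiv.Perm κ)}
    (hx : x ∈ Subalgebra.center R (MonoidAlgebra R (Equiv.Perm κ))) (π : Equiv.Perm κ)
    (c : κ → κ) :
    coeff (wordExponent (twist π fun j => (j, j))) (twistSum (fun j => (c j, c j)) x) =
      x.coeff π * Fintype.card {h : Equiv.Perm κ //
        wordExponent (twist h fun j => (c j, c j)) = wordExponent (twist π fun j => (j, j))} := by
  simp only [twistSum_apply, coeff_sum, coeff_smul, wordMonomial_eq_monomial, coeff_monomial,
    smul_eq_mul, Fintype.card_subtype, Finset.card_filter, Nat.cast_sum, Finset.mul_sum,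
    Nat.cast_ite, Nat.cast_one, Nat.cast_zero, mul_ite, mul_one, mul_zero]
  refine Finset.sum_congr rfl fun h _ => ?_
  split_ifs with hexp
  · exact mem_center_iff_coeff_eq_of_isConj.mp hx h π (isConj_of_wordExponent_twist_eq hexp)
  · rfl

lemma eq_zero_of_sum_twistSum_diagonal_eq_zero [NoZeroDivisors R] [CharZero R]
    {x : MonoidAlgebra R (Equiv.Perm κ)}
    (hx : x ∈ Subalgebra.center R (MonoidAlgebra R (Equiv.Perm κ)))
    (hsum : ∑ c : κ → κ, twistSum (fun j => (c j, c j)) x = 0) : x = 0 := by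
  ext π
  have hcoeff := congrArg (coeff (wordExponent (twist π fun j => (j, j)))) hsum
  simp only [coeff_sum, coeff_twistSum_diagonal hx, ← Finset.mul_sum, ← Nat.cast_sum,
    coeff_zero] at hcoeff
  refine (mul_eq_zero.mp hcoeff).resolve_right (Nat.cast_ne_zero.mpr ?_)
  refine (Finset.sum_pos' (fun _ _ => Nat.zero_le _) ⟨id, Finset.mem_univ _, ?_⟩).ne'
  exact Fintype.card_pos_iff.mpr ⟨⟨π, rfl⟩⟩

lemma psubst_X_one_pow (N d : ℕ) :
    psubst N (X 1 ^ d) = ∑ c : Fin d → Fin N, wordMonomial ℚ fun j => (c j, c j) := by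
  rw [map_pow, psubst, aeval_X, pSub, PNat.one_coe, pow_one, Matrix.trace, Fintype.sum_pow]
  rfl

lemma eq_zero_of_sum_twistSum_embedCenter_eq_zero {d : ℕ} {x : d.Partition → ℚ}
    (hsum : ∑ c : Fin d → Fin d, twistSum (fun j => (c j, c j)) (embedCenter x) = 0) : x = 0 := by
  refine embedCenter_injective ?_
  rw [eq_zero_of_sum_twistSum_diagonal_eq_zero (embedCenter_mem_center x) hsum,
    embedCenter_eq_linearCombination, map_zero]

end DiagonalWords

lemma linearIndependent_matrixW_psubst_X_one_pow :
    LinearIndependent ℚ fun (D : Σ n : ℕ, n.Partition) (d : ℕ) =>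
      matrixW d D.2 (psubst d (MvPolynomial.X 1 ^ d)) := by
  have hmatrixW (d : ℕ) (D : Σ n : ℕ, n.Partition) :
      matrixW d D.2 (psubst d (MvPolynomial.X 1 ^ d)) =
        ∑ c : Fin d → Fin d,
          twistSum (fun j => (c j, c j)) (embedCenter (rhoTo d (diagC D.2))) := by
    simp only [psubst_X_one_pow, map_sum, matrixW_wordMonomial]
  rw [linearIndependent_iff']
  intro s c hs
  refine linearIndependent_iff'.mp linearIndependent_rhoTo_diagC s c (funext fun d => ?_)
  refine eq_zero_of_sum_twistSum_embedCenter_eq_zero ?_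
  have hsd := congrFun hs d
  simp only [Finset.sum_apply, Pi.smul_apply, Pi.zero_apply, hmatrixW] at hsd ⊢
  rw [← hsd]
  simp only [embedCenter_eq_linearCombination, map_sum, map_smul]
  rw [Finset.sum_comm]
  simp only [Finset.smul_sum]

/-- `𝗪(Δ)` is characterized as the (unique) linear operator on `ℚ[p₁,p₂,…]` such that
`(𝗪(Δ)F)(p(X)) = 𝒲_N(Δ)(F(p(X)))` for every `N` and every `F`; the theorem states
that any family `W` with this property represents the algebra `A_∞°` faithfully. -/
theorem W_representation_of_A_infinity
    (W : ∀ n : ℕ, Nat.Partition n → (MvPolynomial ℕ+ ℚ →ₗ[ℚ] MvPolynomial ℕ+ ℚ))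
    (hW : ∀ (n : ℕ) (Δ : Nat.Partition n) (g : Equiv.Perm (Fin n)),
      fullCycleType g = Δ.parts →
      ∀ (N : ℕ) (F : MvPolynomial ℕ+ ℚ),
        psubst N (W n Δ F) = WN N Δ g (psubst N F)) :
    (∀ (n₁ n₂ : ℕ) (Δ₁ : Nat.Partition n₁) (Δ₂ : Nat.Partition n₂),
      (W n₁ Δ₁) ∘ₗ (W n₂ Δ₂) =
        ∑ n ∈ Finset.Icc (max n₁ n₂) (n₁ + n₂),
          ∑ Δ : Nat.Partition n, bracket Δ₁ Δ₂ n Δ • W n Δ) ∧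
    LinearIndependent ℚ (fun D : Σ n : ℕ, Nat.Partition n => W D.1 D.2) := by
  have hmatrix (N n : ℕ) (Δ : n.Partition) (F : MvPolynomial ℕ+ ℚ) :
      psubst N (W n Δ F) = matrixW N Δ (psubst N F) := by
    rw [matrixW_apply, hW n Δ (cycleRep Δ) (fullCycleType_cycleRep Δ)]
  constructor
  · intro n₁ n₂ Δ₁ Δ₂
    refine LinearMap.ext fun F => sub_eq_zero.mp (eq_zero_of_forall_psubst_eq_zero fun N => ?_)
    rw [map_sub, sub_eq_zero, LinearMap.comp_apply, hmatrix, hmatrix, ← Module.End.mul_apply,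
      matrixW_mul_matrixW]
    simp only [LinearMap.sum_apply, LinearMap.smul_apply, map_sum, map_smul, hmatrix]
  · let evalPowers : Module.End ℚ (MvPolynomial ℕ+ ℚ) →ₗ[ℚ] (d : ℕ) → RN d :=
      LinearMap.pi fun d =>
        (psubst d).toLinearMap ∘ₗ LinearMap.applyₗ (MvPolynomial.X 1 ^ d)
    refine LinearIndependent.of_comp evalPowers ?_
    convert linearIndependent_matrixW_psubst_X_one_pow using 3 with D d
    exact hmatrix d D.1 D.2 _
end

section
/- For any N ≥ 1, any indices a, b, a', b' ∈ {1,…,N}, and any polynomial F in the variables p₁, p₂, …, the normally ordered second-order operator acts on F(p(X)) by :D_{a'b'}D_{ab}:(F(p(X))) = Σ_k k·(Σ_{j=1}^{k−1} (X^j)_{ab'}(X^{k−j})_{a'b})·(∂F/∂p_k)(p(X)) + Σ_{k,l} k·l·(X^k)_{ab}(X^l)_{a'b'}·(∂²F/∂p_k∂p_l)(p(X)). -/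
open scoped Classical
open MvPolynomial

/-!
The operator `D_{ab} = ∑ₑ X_{ae} ∂/∂X_{be}` is the derivation that replaces row `b` of `X` by row
`a`, so `D_{ab} X = E_{ba} X`, hence `D_{ab} (Xᵏ)_{ij} = ∑_{m<k} (Xᵐ)_{ib} (Xᵏ⁻ᵐ)_{aj}` and
`D_{ab} tr Xᵏ = k (Xᵏ)_{ab}`. Normal ordering only subtracts a first-order term,
`:D_{a'b'}D_{ab}: = D_{a'b'} D_{ab} - δ_{ab'} D_{a'b}`, so the second-order chain rule for a pair of
derivations passes to `:D_{a'b'}D_{ab}:`, and the subtracted term cancels the summand `m = 0` of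
`D_{a'b'} D_{ab} tr Xᵏ`.
-/

section PartialDerivatives

variable {R σ : Type*} [CommSemiring R]

theorem pderiv_pderiv_comm (i j : σ) (F : MvPolynomial σ R) :
    pderiv i (pderiv j F) = pderiv j (pderiv i F) := by
  induction F using MvPolynomial.induction_on with
  | C r => simp only [pderiv_C, map_zero]
  | add P Q hP hQ => simp only [map_add, hP, hQ]
  | mul_X P k hP =>
    simp only [pderiv_mul, map_add, hP, pderiv_X, Pi.single_apply, apply_ite (pderiv _), pderiv_one,
      map_zero, ite_self]
    ring

theorem finite_support_of_pderiv_eq_zero {M : Type*} [Zero M] (F : MvPolynomial σ R) {g : σ → M}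
    (hg : ∀ k, pderiv k F = 0 → g k = 0) : g.support.Finite :=
  F.vars.finite_toSet.subset fun k hk => by
    by_contra hkF
    exact hk (hg k (pderiv_eq_zero_of_notMem_vars hkF))

end PartialDerivatives

section ChainRule

variable {R A M σ : Type*} [CommSemiring R] [CommSemiring A] [Algebra R A]
  [AddCommMonoid M] [Module A M] [Module R M]

theorem derivation_aeval (d : Derivation R A M) (f : σ → A) (F : MvPolynomial σ R) :
    d (aeval f F) = ∑ᶠ k, aeval f (pderiv k F) • d (f k) := by
  have finite_support (P : MvPolynomial σ R) :
      (fun k => aeval f (pderiv k P) • d (f k)).support.Finite :=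
    finite_support_of_pderiv_eq_zero P fun k hk => by rw [hk, map_zero, zero_smul]
  induction F using MvPolynomial.induction_on with
  | C r => simp
  | add P Q hP hQ =>
    simp only [map_add, add_smul, hP, hQ]
    exact (finsum_add_distrib (finite_support P) (finite_support Q)).symm
  | mul_X P i hP =>
    have vanish_of_ne (k : σ) (hk : k ≠ i) : aeval f (P * pderiv k (X i)) • d (f k) = 0 := by
      rw [pderiv_X_of_ne hk.symm, mul_zero, map_zero, zero_smul]
    have sum_pderiv_X : ∑ᶠ k, aeval f (P * pderiv k (X i)) • d (f k) = aeval f P • d (f i) := by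
      rw [finsum_eq_single _ i vanish_of_ne, pderiv_X_self, mul_one]
    have sum_pderiv_P : ∑ᶠ k, aeval f (pderiv k P * X i) • d (f k) = f i • d (aeval f P) := by
      rw [hP, smul_finsum' _ (finite_support P)]
      simp only [map_mul, aeval_X, mul_comm _ (f i), mul_smul]
    simp only [pderiv_mul, map_add, add_smul]
    rw [finsum_add_distrib, sum_pderiv_X, sum_pderiv_P, map_mul, aeval_X, Derivation.leibniz,
      add_comm]
    · exact finite_support_of_pderiv_eq_zero P fun k hk => by
        rw [hk, zero_mul, map_zero, zero_smul]
    · exact (Set.finite_singleton i).subset fun k hk => by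
        by_contra hki
        exact hk (vanish_of_ne k hki)

theorem derivation_derivation_aeval (d₁ : Derivation R A M) (d₂ : Derivation R A A) (f : σ → A)
    (F : MvPolynomial σ R) :
    d₁ (d₂ (aeval f F)) = ∑ᶠ k, aeval f (pderiv k F) • d₁ (d₂ (f k)) +
      ∑ᶠ k, ∑ᶠ l, (d₂ (f k) * aeval f (pderiv k (pderiv l F))) • d₁ (f l) := by
  have inner_sum (k : σ) : d₂ (f k) • d₁ (aeval f (pderiv k F)) =
      ∑ᶠ l, (d₂ (f k) * aeval f (pderiv k (pderiv l F))) • d₁ (f l) := by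
    rw [derivation_aeval, smul_finsum']
    · simp only [mul_smul, pderiv_pderiv_comm k]
    · exact finite_support_of_pderiv_eq_zero (pderiv k F) fun l hl => by
        rw [hl, map_zero, zero_smul]
  simp only [← inner_sum]
  rw [derivation_aeval d₂, map_finsum d₁, ← finsum_add_distrib]
  · simp only [smul_eq_mul, Derivation.leibniz]
  all_goals
    refine finite_support_of_pderiv_eq_zero F fun k hk => ?_
    simp only [hk, map_zero, zero_smul, smul_zero]

end ChainRule

section MatrixDerivation

variable {R A l m n : Type*} [CommSemiring R] [CommSemiring A] [Algebra R A] [Fintype m]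

theorem map_derivation_mul (d : Derivation R A A) (M : Matrix l m A) (N : Matrix m n A) :
    (M * N).map d = M.map d * N + M * N.map d := by
  ext i j
  simp only [Matrix.map_apply, Matrix.mul_apply, Matrix.add_apply, map_sum, Derivation.leibniz,
    smul_eq_mul, Finset.sum_add_distrib, mul_comm (N _ _)]
  exact add_comm _ _

theorem map_derivation_pow [DecidableEq m] (d : Derivation R A A) (M : Matrix m m A) (k : ℕ) :
    (M ^ k).map d = ∑ i ∈ Finset.range k, M ^ i * M.map d * M ^ (k - 1 - i) := by
  induction k with
  | zero =>
    ext i j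
    simp [Matrix.one_apply, apply_ite d]
  | succ k ih =>
    rw [pow_succ, map_derivation_mul, ih, Finset.sum_mul, Finset.sum_range_succ,
      Nat.add_sub_cancel, Nat.sub_self, pow_zero, mul_one]
    congr 1
    refine Finset.sum_congr rfl fun i hi => ?_
    have exponent : k - i = k - 1 - i + 1 := by grind
    rw [exponent, pow_succ, mul_assoc]

end MatrixDerivation

section Polarization

variable {R ι κ : Type*} [CommSemiring R] [Fintype κ]

/-- The polarization operator `D_{ab} = ∑ₑ X_{ae} ∂/∂X_{be}` on polynomials in the entries of an
`ι × κ` matrix of variables, bundled as a derivation. -/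
noncomputable def polarization (a b : ι) :
    Derivation R (MvPolynomial (ι × κ) R) (MvPolynomial (ι × κ) R) :=
  ∑ e, (X (a, e) : MvPolynomial (ι × κ) R) • pderiv (b, e)

/-- The normally ordered product `:D_{a'b'} D_{ab}:` of two polarization operators: all
multiplications by variables stand to the left of all partial derivatives. -/
noncomputable def normalOrderedPair (a' b' a b : ι) (P : MvPolynomial (ι × κ) R) :
    MvPolynomial (ι × κ) R :=
  ∑ e₁, ∑ e₂, X (a', e₁) * X (a, e₂) * pderiv (b', e₁) (pderiv (b, e₂) P)

theorem polarization_apply (a b : ι) (P : MvPolynomial (ι × κ) R) :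
    polarization a b P = ∑ e, X (a, e) * pderiv (b, e) P := by
  rw [polarization, ← Derivation.coeFnAddMonoidHom_apply, map_sum, Finset.sum_apply]
  rfl

theorem polarization_X [DecidableEq ι] (a b i : ι) (j : κ) :
    polarization a b (X (i, j) : MvPolynomial (ι × κ) R) = if i = b then X (a, j) else 0 := by
  classical
  simp [polarization_apply, pderiv_X, Pi.single_apply, ite_and, eq_comm]

theorem polarization_polarization [DecidableEq ι] (a' b' a b : ι) (P : MvPolynomial (ι × κ) R) :
    polarization a' b' (polarization a b P) =
      normalOrderedPair a' b' a b P + if a = b' then polarization a' b P else 0 := by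
  rw [polarization_apply a b, map_sum]
  simp only [Derivation.leibniz, smul_eq_mul, Finset.sum_add_distrib, polarization_X]
  congr 1
  · simp only [polarization_apply, normalOrderedPair, Finset.mul_sum]
    rw [Finset.sum_comm]
    exact Finset.sum_congr rfl fun _ _ => Finset.sum_congr rfl fun _ _ => by ring
  · split_ifs <;> simp [polarization_apply, mul_comm]

end Polarization

section NormalOrdering

variable {R ι κ σ : Type*} [CommRing R] [Fintype κ]

theorem normalOrderedPair_aeval (a' b' a b : ι) (f : σ → MvPolynomial (ι × κ) R)
    (F : MvPolynomial σ R) :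
    normalOrderedPair a' b' a b (aeval f F) =
      ∑ᶠ k, aeval f (pderiv k F) * normalOrderedPair a' b' a b (f k) +
      ∑ᶠ k, ∑ᶠ l, polarization a b (f k) * aeval f (pderiv k (pderiv l F)) *
        polarization a' b' (f l) := by
  classical
  have second_order := derivation_derivation_aeval (polarization a' b') (polarization a b) f F
  have first_order := derivation_aeval (polarization a' b) f F
  simp only [polarization_polarization, smul_eq_mul, mul_add] at second_order first_order
  rw [finsum_add_distrib] at second_order
  · split_ifs at second_order
    · rw [← first_order] at second_order
      linear_combination second_order
    · simpa using second_order
  all_goals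
    exact finite_support_of_pderiv_eq_zero F fun k hk => by rw [hk, map_zero, zero_mul]

end NormalOrdering

/-- The substitution `p_k ↦ tr Xᵏ` for the generic `ι × ι` matrix `X`; the variable of index
`k : ℕ+` is `p_k`. -/
noncomputable def powerTraceSubst (ι R : Type*) [Fintype ι] [DecidableEq ι] [CommSemiring R] :
    MvPolynomial ℕ+ R →ₐ[R] MvPolynomial (ι × ι) R :=
  aeval fun k : ℕ+ => (Matrix.mvPolynomialX ι ι R ^ (k : ℕ)).trace

section GenericMatrix

variable {R ι : Type*} [Fintype ι] [DecidableEq ι]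

local notation "𝐗" => Matrix.mvPolynomialX ι ι R

theorem map_polarization_mvPolynomialX [CommSemiring R] (a b : ι) :
    𝐗.map (polarization a b) = Matrix.single b a 1 * 𝐗 := by
  ext i j
  by_cases h : i = b
  · subst h
    simp [polarization_X]
  · simp [polarization_X, h]

theorem map_polarization_mvPolynomialX_pow [CommSemiring R] (a b : ι) (n : ℕ) :
    (𝐗 ^ n).map (polarization a b) =
      ∑ m ∈ Finset.range n, 𝐗 ^ m * Matrix.single b a 1 * 𝐗 ^ (n - m) := by
  rw [map_derivation_pow, map_polarization_mvPolynomialX]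
  refine Finset.sum_congr rfl fun m hm => ?_
  have exponent : n - m = n - 1 - m + 1 := by grind
  simp only [exponent, pow_succ', mul_assoc]

theorem polarization_mvPolynomialX_pow_apply [CommSemiring R] (a b i j : ι) (n : ℕ) :
    polarization a b ((𝐗 ^ n) i j) =
      ∑ m ∈ Finset.range n, (𝐗 ^ m) i b * (𝐗 ^ (n - m)) a j := by
  rw [← Matrix.map_apply (f := polarization a b), map_polarization_mvPolynomialX_pow,
    Matrix.sum_apply]
  refine Finset.sum_congr rfl fun m _ => ?_
  rw [Matrix.mul_apply, Finset.sum_eq_single a _ (by simp), Matrix.mul_single_apply_same, mul_one]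
  intro c _ hc
  rw [Matrix.mul_single_apply_of_ne _ _ _ _ _ hc, zero_mul]

theorem polarization_trace_mvPolynomialX_pow [CommSemiring R] (a b : ι) (n : ℕ) :
    polarization a b (𝐗 ^ n).trace = n • (𝐗 ^ n) a b := by
  have trace_summand (m : ℕ) (hm : m ∈ Finset.range n) :
      (𝐗 ^ m * Matrix.single b a 1 * 𝐗 ^ (n - m)).trace = (𝐗 ^ n) a b := by
    rw [Matrix.trace_mul_cycle, ← pow_add, Nat.sub_add_cancel (Finset.mem_range.1 hm).le,
      Matrix.trace_mul_single, MulOpposite.op_one, one_smul]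
  rw [AddMonoidHom.map_trace, map_polarization_mvPolynomialX_pow, Matrix.trace_sum,
    Finset.sum_congr rfl trace_summand, Finset.sum_const, Finset.card_range]

theorem normalOrderedPair_trace_mvPolynomialX_pow [CommRing R] (a' b' a b : ι) (n : ℕ) :
    normalOrderedPair a' b' a b (𝐗 ^ n).trace =
      n • ∑ j ∈ Finset.Ico 1 n, (𝐗 ^ j) a b' * (𝐗 ^ (n - j)) a' b := by
  have iterated := polarization_polarization a' b' a b (𝐗 ^ n).trace
  simp only [polarization_trace_mvPolynomialX_pow, map_nsmul,
    polarization_mvPolynomialX_pow_apply] at iterated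
  obtain rfl | hn := n.eq_zero_or_pos
  · simpa using iterated.symm
  · rw [Finset.sum_range_eq_add_Ico _ hn, pow_zero, Matrix.one_apply, Nat.sub_zero, ite_mul,
      one_mul, zero_mul, smul_add, smul_ite, smul_zero, add_comm] at iterated
    exact (add_right_cancel iterated).symm

theorem normal_ordered_second_order_chain_rule_general [CommRing R] (a b a' b' : ι)
    (F : MvPolynomial ℕ+ R) :
    normalOrderedPair a' b' a b (powerTraceSubst ι R F) =
      (∑ᶠ k : ℕ+, (k : ℕ) •
        ((∑ j ∈ Finset.Ico 1 (k : ℕ), (𝐗 ^ j) a b' * (𝐗 ^ ((k : ℕ) - j)) a' b) *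
          powerTraceSubst ι R (pderiv k F))) +
      ∑ᶠ k : ℕ+, ∑ᶠ l : ℕ+, ((k : ℕ) * (l : ℕ)) •
        ((𝐗 ^ (k : ℕ)) a b * (𝐗 ^ (l : ℕ)) a' b' *
          powerTraceSubst ι R (pderiv k (pderiv l F))) := by
  simp only [powerTraceSubst, normalOrderedPair_aeval, polarization_trace_mvPolynomialX_pow,
    normalOrderedPair_trace_mvPolynomialX_pow, nsmul_eq_mul, Nat.cast_mul]
  congr 1
  · exact finsum_congr fun k => by ring
  · exact finsum_congr fun k => finsum_congr fun l => by ring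

end GenericMatrix

theorem NOpN_pair {N : ℕ} (a' b' a b : Fin N) (P : RN N) :
    NOpN N ![a', a] ![b', b] P = normalOrderedPair a' b' a b P := by
  unfold NOpN normalOrderedPair
  rw [← (finTwoArrowEquiv (Fin N)).symm.sum_comp, Fintype.sum_prod_type]
  simp [List.ofFn_succ, Fin.prod_univ_two]

theorem XM_eq_mvPolynomialX (N : ℕ) : XM N = Matrix.mvPolynomialX (Fin N) (Fin N) ℚ := rfl

theorem psubst_eq_powerTraceSubst (N : ℕ) : psubst N = powerTraceSubst (Fin N) ℚ := rfl

theorem normal_ordered_second_order_chain_rule (N : ℕ) (hN : 1 ≤ N)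
    (a b a' b' : Fin N) (F : MvPolynomial ℕ+ ℚ) :
    NOpN N ![a', a] ![b', b] (psubst N F) =
      (∑ᶠ k : ℕ+, ((k : ℕ) : ℚ) •
        ((∑ j ∈ Finset.Ico 1 (k : ℕ), ((XM N) ^ j) a b' * ((XM N) ^ ((k : ℕ) - j)) a' b) *
          psubst N (MvPolynomial.pderiv k F))) +
      ∑ᶠ k : ℕ+, ∑ᶠ l : ℕ+, (((k : ℕ) : ℚ) * ((l : ℕ) : ℚ)) •
        (((XM N) ^ (k : ℕ)) a b * ((XM N) ^ (l : ℕ)) a' b' *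
          psubst N (MvPolynomial.pderiv k (MvPolynomial.pderiv l F))) := by
  simpa only [NOpN_pair, XM_eq_mvPolynomialX, psubst_eq_powerTraceSubst,
    ← Nat.cast_smul_eq_nsmul ℚ, Nat.cast_mul] using
    normal_ordered_second_order_chain_rule_general a b a' b' F
end
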